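/- arXiv:1507.03163 — 2 statements merged into one kernel-verified Lean document; each statement's English description precedes it below -/
import Mathlib

section
/- Let n ≥ 1 and let σ ∈ S_{4n} be any permutation that is a product of n disjoint 4-cycles. Then the number of permutations τ ∈ S_{4n} that are products of 2n disjoint transpositions and such that σ²·τ is a product of two disjoint 2n-cycles equals (4n−2)!! = 2^{2n−1}·(2n−1)!. -/
/-!
Write `α = σ²`, a fixed-point-free involution of a set `X` with `2m` elements, `m = 2n`. An
involution `τ` as in the statement is the same thing as a free action of the dihedral group
`⟨s, t ∣ s² = t² = (st)ᵐ = 1⟩` on `X` in which `s` acts as `α`. Since the group also has `2m`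
elements, such an action together with a base point is the same thing as a bijection from the group
to `X` carrying left multiplication by `s` to `α`. These bijections form a torsor under the
centralizer of `α`, which has `2ᵐ m!` elements; dividing by the `2m` base points gives
`2ᵐ⁻¹ (m - 1)!`.
-/

open Equiv Equiv.Perm Function

section MinimalPeriod

variable {X : Type*}

theorem pow_apply_eq_self_iff_minimalPeriod_dvd {π : Perm X} {x : X} {i : ℕ} :
    (π ^ i) x = x ↔ minimalPeriod π x ∣ i :=
  MulAction.pow_smul_eq_iff_minimalPeriod_dvd (a := π)

theorem zpow_apply_eq_self_iff_minimalPeriod_dvd {π : Perm X} {x : X} {i : ℤ} :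
    (π ^ i) x = x ↔ (minimalPeriod π x : ℤ) ∣ i :=
  MulAction.zpow_smul_eq_iff_minimalPeriod_dvd (a := π)

theorem pow_eq_one_of_minimalPeriod_eq {π : Perm X} {k : ℕ} (h : ∀ x, minimalPeriod π x = k) :
    π ^ k = 1 :=
  Perm.ext fun x => pow_apply_eq_self_iff_minimalPeriod_dvd.2 (h x).dvd

theorem apply_ne_self_of_minimalPeriod_ne_one {π : Perm X} {x : X} (h : minimalPeriod π x ≠ 1) :
    π x ≠ x :=
  fun hx => h (minimalPeriod_eq_one_iff_isFixedPt.2 hx)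

variable [Fintype X] [DecidableEq X]

theorem minimalPeriod_eq_card_support_cycleOf {π : Perm X} {x : X} (hx : π x ≠ x) :
    minimalPeriod π x = (π.cycleOf x).support.card :=
  Nat.dvd_right_iff_eq.1 fun i => by
    rw [← pow_apply_eq_self_iff_minimalPeriod_dvd,
      (isCycleOn_support_cycleOf π x).pow_apply_eq (mem_support_cycleOf_iff.2 ⟨.rfl, by simpa⟩)]

theorem mem_cycleType_iff_exists_minimalPeriod_eq {π : Perm X} {k : ℕ} :
    k ∈ π.cycleType ↔ ∃ x, π x ≠ x ∧ minimalPeriod π x = k := by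
  rw [cycleType_def, Multiset.mem_map]
  constructor
  · rintro ⟨c, hc, rfl⟩
    obtain ⟨x, hxc⟩ := (mem_cycleFactorsFinset_iff.1 hc).1.nonempty_support
    have hx : π x ≠ x := mem_support.1 (mem_cycleFactorsFinset_support_le hc hxc)
    refine ⟨x, hx, ?_⟩
    rw [minimalPeriod_eq_card_support_cycleOf hx, cycle_is_cycleOf hxc hc, comp_apply]
  · rintro ⟨x, hx, rfl⟩
    exact ⟨π.cycleOf x, cycleOf_mem_cycleFactorsFinset_iff.2 (mem_support.2 hx),
      (minimalPeriod_eq_card_support_cycleOf hx).symm⟩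

theorem cycleType_eq_replicate_of_minimalPeriod_eq {π : Perm X} {k : ℕ} (hk : 2 ≤ k)
    (h : ∀ x, minimalPeriod π x = k) :
    π.cycleType = Multiset.replicate (Fintype.card X / k) k := by
  have hreplicate : π.cycleType = Multiset.replicate π.cycleType.card k := by
    refine Multiset.eq_replicate_card.2 fun l hl => ?_
    obtain ⟨x, -, rfl⟩ := mem_cycleType_iff_exists_minimalPeriod_eq.1 hl
    exact h x
  have hsupport : π.support = Finset.univ := Finset.eq_univ_iff_forall.2 fun x =>
    Perm.mem_support.2 (apply_ne_self_of_minimalPeriod_ne_one (by rw [h x]; omega))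
  have hcard : Fintype.card X = π.cycleType.card * k := by
    rw [← smul_eq_mul, ← Multiset.sum_replicate, ← hreplicate, sum_cycleType, hsupport,
      Finset.card_univ]
  rw [hcard, Nat.mul_div_cancel _ (by omega), ← hreplicate]

theorem cycleType_eq_replicate_iff_minimalPeriod_eq {π : Perm X} {c k : ℕ} (hk : 2 ≤ k)
    (hX : Fintype.card X = c * k) :
    π.cycleType = Multiset.replicate c k ↔ ∀ x, minimalPeriod π x = k := by
  constructor
  · intro h x
    have hsupport : π.support = Finset.univ := by
      rw [← Finset.card_eq_iff_eq_univ, ← sum_cycleType, h, hX, Multiset.sum_replicate, smul_eq_mul]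
    have hx : π x ≠ x := by simp [← Perm.mem_support, hsupport]
    have hmem : minimalPeriod π x ∈ π.cycleType :=
      mem_cycleType_iff_exists_minimalPeriod_eq.2 ⟨x, hx, rfl⟩
    exact Multiset.eq_of_mem_replicate (h ▸ hmem)
  · intro h
    rw [cycleType_eq_replicate_of_minimalPeriod_eq hk h, hX, Nat.mul_div_cancel _ (by omega)]

theorem cycleType_pow_eq_replicate {π : Perm X} {c d k : ℕ} (hd : d ≠ 0) (hk : 2 ≤ k)
    (hX : Fintype.card X = c * (d * k)) (h : π.cycleType = Multiset.replicate c (d * k)) :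
    (π ^ d).cycleType = Multiset.replicate (c * d) k := by
  have hdk : 2 ≤ d * k := hk.trans (Nat.le_mul_of_pos_left k (Nat.pos_of_ne_zero hd))
  rw [cycleType_eq_replicate_iff_minimalPeriod_eq hdk hX] at h
  rw [cycleType_eq_replicate_iff_minimalPeriod_eq hk (by rw [hX, mul_assoc])]
  intro x
  rw [← iterate_eq_pow, minimalPeriod_iterate_eq_div_gcd hd, h x, Nat.gcd_mul_right_left,
    Nat.mul_div_cancel_left k (Nat.pos_of_ne_zero hd)]

theorem nat_card_centralizer_of_cycleType_eq_replicate {π : Perm X} {c k : ℕ}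
    (hX : Fintype.card X = c * k) (h : π.cycleType = Multiset.replicate c k) :
    Nat.card (Subgroup.centralizer {π}) = k ^ c * c.factorial := by
  rw [nat_card_centralizer, h]
  rcases eq_or_ne c 0 with rfl | hc
  · simp [hX]
  · simp [hX, Multiset.toFinset_replicate, hc]

end MinimalPeriod

theorem isConj_of_minimalPeriod_eq {X : Type*} [Finite X] {π ρ : Perm X} {k : ℕ}
    (hπ : ∀ x, minimalPeriod π x = k) (hρ : ∀ x, minimalPeriod ρ x = k) : IsConj π ρ := by
  classical
  have := Fintype.ofFinite X
  rcases lt_or_ge k 2 with hk | hk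
  · have eq_one {κ : Perm X} (hκ : ∀ x, minimalPeriod κ x = k) : κ = 1 := Perm.ext fun x => by
      have hpos := minimalPeriod_pos_of_mem_periodicPts (κ.injective.mem_periodicPts x)
      exact minimalPeriod_eq_one_iff_isFixedPt.1 (by have := hκ x; omega)
    rw [eq_one hπ, eq_one hρ]
  · rw [isConj_iff_cycleType_eq, cycleType_eq_replicate_of_minimalPeriod_eq hk hπ,
      cycleType_eq_replicate_of_minimalPeriod_eq hk hρ]

section FreeAction

variable {G X Y : Type*} [Group G]

/-- A homomorphism `G →* Perm X`, seen as an action of `G` on `X`, is free: every nontrivial group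
element moves every point. Actions are unbundled homomorphisms here because they get counted. -/
def ActsFreely (φ : G →* Perm X) : Prop :=
  ∀ g x, φ g x = x → g = 1

theorem ActsFreely.minimalPeriod_eq_orderOf {φ : G →* Perm X} (hφ : ActsFreely φ) (g : G) (x : X) :
    minimalPeriod (φ g) x = orderOf g :=
  Nat.dvd_right_iff_eq.1 fun i => by
    rw [← pow_apply_eq_self_iff_minimalPeriod_dvd, ← map_pow, orderOf_dvd_iff_pow_eq_one]
    exact ⟨hφ _ x, fun h => by rw [h, map_one, one_apply]⟩

theorem ActsFreely.injective_apply {φ : G →* Perm X} (hφ : ActsFreely φ) (x : X) :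
    Injective fun g => φ g x := fun g h (hgh : φ g x = φ h x) => by
  refine (inv_mul_eq_one.1 (hφ (h⁻¹ * g) x ?_)).symm
  rw [map_mul, Perm.mul_apply, hgh, ← Perm.mul_apply, ← map_mul, inv_mul_cancel, map_one, one_apply]

/-- The left regular action of `G` on itself, transported to `X` along a bijection. -/
def transportedRegular (e : G ≃ X) : G →* Perm X :=
  e.permCongrHom.toMonoidHom.comp (MulAction.toPermHom G G)

theorem transportedRegular_apply_apply (e : G ≃ X) (g y : G) :
    transportedRegular e g (e y) = e (g * y) := by
  simp [transportedRegular]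

theorem actsFreely_transportedRegular (e : G ≃ X) : ActsFreely (transportedRegular e) := by
  intro g x hx
  obtain ⟨y, rfl⟩ := e.surjective x
  rw [transportedRegular_apply_apply] at hx
  exact mul_eq_right.1 (e.injective hx)

/-- The orbit map of a point under a free action of a group with as many elements as the set. -/
noncomputable def ActsFreely.orbitEquiv [Finite X] {φ : G →* Perm X} (hφ : ActsFreely φ)
    (hcard : Nat.card G = Nat.card X) (x : X) : G ≃ X :=
  Equiv.ofBijective (fun g => φ g x)
    ((Nat.bijective_iff_injective_and_card _).2 ⟨hφ.injective_apply x, hcard⟩)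

theorem ActsFreely.orbitEquiv_apply [Finite X] {φ : G →* Perm X} (hφ : ActsFreely φ)
    (hcard : Nat.card G = Nat.card X) (x : X) (g : G) : hφ.orbitEquiv hcard x g = φ g x :=
  rfl

theorem ActsFreely.transportedRegular_orbitEquiv [Finite X] {φ : G →* Perm X} (hφ : ActsFreely φ)
    (hcard : Nat.card G = Nat.card X) (x : X) :
    transportedRegular (hφ.orbitEquiv hcard x) = φ := by
  ext g z
  obtain ⟨y, rfl⟩ := (hφ.orbitEquiv hcard x).surjective z
  rw [transportedRegular_apply_apply, orbitEquiv_apply, orbitEquiv_apply, map_mul, Perm.mul_apply]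

/-- A bijection `G ≃ X` amounts to a free action of `G` on `X` with a base point, the image of `1`.
Only the actions in which `s` acts as a prescribed permutation `α` are considered. -/
noncomputable def transportedRegularEquiv [Finite X] (hcard : Nat.card G = Nat.card X) (s : G)
    (α : Perm X) :
    {e : G ≃ X // transportedRegular e s = α} ≃
      {φ : G →* Perm X // ActsFreely φ ∧ φ s = α} × X where
  toFun e := (⟨transportedRegular e.1, actsFreely_transportedRegular e.1, e.2⟩, e.1 1)
  invFun p := ⟨p.1.2.1.orbitEquiv hcard p.2, by
    rw [ActsFreely.transportedRegular_orbitEquiv, p.1.2.2]⟩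
  left_inv e := by
    ext g
    simp only [ActsFreely.orbitEquiv_apply, transportedRegular_apply_apply, mul_one]
  right_inv p := by
    ext1
    · exact Subtype.ext (p.1.2.1.transportedRegular_orbitEquiv hcard p.2)
    · simp only [ActsFreely.orbitEquiv_apply, map_one, one_apply]

theorem exists_transportedRegular_apply_eq [Finite G] [Finite X] (hcard : Nat.card G = Nat.card X)
    {s : G} {α : Perm X} (hα : ∀ x, minimalPeriod α x = orderOf s) :
    ∃ e : G ≃ X, transportedRegular e s = α := by
  obtain ⟨e⟩ := Finite.card_eq.1 hcard
  obtain ⟨c, hc⟩ := isConj_iff.1 (isConj_of_minimalPeriod_eq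
    ((actsFreely_transportedRegular e).minimalPeriod_eq_orderOf s) hα)
  exact ⟨e.trans c, hc⟩

theorem nat_card_permCongr_eq {α : Perm X} {β : Perm Y} (e₀ : Y ≃ X) (he₀ : e₀.permCongr β = α) :
    Nat.card {e : Y ≃ X // e.permCongr β = α} = Nat.card (Subgroup.centralizer {α}) := by
  refine Nat.card_congr ((e₀.equivCongr (Equiv.refl X)).subtypeEquiv fun e => ?_)
  set g : Perm X := e₀.equivCongr (Equiv.refl X) e
  have hconj : e.permCongr β = g * α * g⁻¹ := by
    subst he₀
    ext x
    simp [g]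
  rw [hconj, mul_inv_eq_iff_eq_mul, Subgroup.mem_centralizer_singleton_iff]

theorem nat_card_actsFreely_mul [Finite G] [Finite X] (hcard : Nat.card G = Nat.card X) {s : G}
    {α : Perm X} (hα : ∀ x, minimalPeriod α x = orderOf s) :
    Nat.card {φ : G →* Perm X // ActsFreely φ ∧ φ s = α} * Nat.card X =
      Nat.card (Subgroup.centralizer {α}) := by
  obtain ⟨e₀, he₀⟩ := exists_transportedRegular_apply_eq hcard hα
  rw [← Nat.card_prod, ← Nat.card_congr (transportedRegularEquiv hcard s α)]
  exact nat_card_permCongr_eq e₀ he₀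

end FreeAction

section Dihedral

open DihedralGroup

variable {G X : Type*} [Group G] {m : ℕ}

theorem zpow_zmodCast_intCast {g : G} (hg : g ^ m = 1) (k : ℤ) :
    g ^ ((k : ZMod m).cast : ℤ) = g ^ k := by
  rw [ZMod.coe_intCast, ← zpow_eq_zpow_emod' k hg]

theorem mul_zpow_mul_eq_mul_mul_zpow_neg {a b : G} (ha : a ^ 2 = 1) (hb : b ^ 2 = 1) (k : ℤ) :
    (a * b) ^ k * a = a * (a * b) ^ (-k) := by
  have hinv : (a * b)⁻¹ = b * a := by
    rw [mul_inv_rev, inv_eq_of_mul_eq_one_left (sq b ▸ hb), inv_eq_of_mul_eq_one_left (sq a ▸ ha)]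
  have hconj : SemiconjBy a (a * b)⁻¹ (a * b) := by
    rw [hinv, SemiconjBy, mul_assoc]
  rw [← inv_zpow']
  exact (hconj.zpow_right k).symm

/-- The homomorphism out of the dihedral group `⟨s, t ∣ s² = t² = (st)ᵐ = 1⟩`, where `s = sr 0` and
`t = sr 1`, given by the images `a` of `s` and `b` of `t`. -/
def dihedralLift (a b : G) (ha : a ^ 2 = 1) (hb : b ^ 2 = 1) (hab : (a * b) ^ m = 1) :
    DihedralGroup m →* G where
  toFun
    | r i => (a * b) ^ (i.cast : ℤ)
    | sr i => a * (a * b) ^ (i.cast : ℤ)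
  map_one' := by simp only [DihedralGroup.one_def, ZMod.cast_zero, zpow_zero]
  map_mul' := by
    have ha' (c : G) : a * (a * c) = c := by rw [← mul_assoc, ← sq, ha, one_mul]
    have hcomm := mul_zpow_mul_eq_mul_mul_zpow_neg ha hb
    rintro (i | i) (j | j) <;>
      obtain ⟨k, rfl⟩ := ZMod.intCast_surjective i <;>
      obtain ⟨l, rfl⟩ := ZMod.intCast_surjective j
    · simp only [r_mul_r, ← Int.cast_add, zpow_zmodCast_intCast hab, zpow_add]
    · simp only [r_mul_sr, ← Int.cast_sub, zpow_zmodCast_intCast hab, ← mul_assoc, hcomm]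
      rw [mul_assoc, ← zpow_add, neg_add_eq_sub]
    · simp only [sr_mul_r, ← Int.cast_add, zpow_zmodCast_intCast hab, zpow_add, mul_assoc]
    · simp only [sr_mul_sr, ← Int.cast_sub, zpow_zmodCast_intCast hab]
      rw [mul_assoc, ← mul_assoc _ a, hcomm, mul_assoc, ha', ← zpow_add, neg_add_eq_sub]

theorem dihedralLift_sr_zero (a b : G) (ha : a ^ 2 = 1) (hb : b ^ 2 = 1) (hab : (a * b) ^ m = 1) :
    dihedralLift a b ha hb hab (sr 0) = a := by
  simp [dihedralLift]

theorem dihedralLift_sr_one (a b : G) (ha : a ^ 2 = 1) (hb : b ^ 2 = 1) (hab : (a * b) ^ m = 1) :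
    dihedralLift a b ha hb hab (sr 1) = b := by
  have h := zpow_zmodCast_intCast hab 1
  rw [Int.cast_one, zpow_one] at h
  change a * (a * b) ^ ((1 : ZMod m).cast : ℤ) = b
  rw [h, ← mul_assoc, ← sq, ha, one_mul]

theorem dihedralGroup_hom_ext {φ ψ : DihedralGroup m →* G} (h₀ : φ (sr 0) = ψ (sr 0))
    (h₁ : φ (sr 1) = ψ (sr 1)) : φ = ψ := by
  have hr (i : ZMod m) : φ (r i) = ψ (r i) := by
    obtain ⟨k, rfl⟩ := ZMod.intCast_surjective i
    have : (r k : DihedralGroup m) = (sr 0 * sr 1) ^ k := by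
      rw [sr_mul_sr, sub_zero, r_one_zpow]
    rw [this, map_zpow, map_zpow, map_mul, map_mul, h₀, h₁]
  ext (i | i)
  · exact hr i
  · have : (sr i : DihedralGroup m) = sr 0 * r i := by rw [sr_mul_r, zero_add]
    rw [this, map_mul, map_mul, h₀, hr]

theorem isConj_sr_zero_or_isConj_sr_one (i : ZMod m) :
    IsConj (sr 0) (sr i) ∨ IsConj (sr 1) (sr i) := by
  obtain ⟨k, rfl⟩ := ZMod.intCast_surjective i
  obtain ⟨j, rfl | rfl⟩ := Int.even_or_odd' k
  · refine .inl (isConj_iff.2 ⟨r (-j), ?_⟩)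
    simp only [r_mul_sr, inv_r, sr_mul_r, sr.injEq]
    push_cast
    ring
  · refine .inr (isConj_iff.2 ⟨r (-j), ?_⟩)
    simp only [r_mul_sr, inv_r, sr_mul_r, sr.injEq]
    push_cast
    ring

theorem apply_ne_self_of_isConj {π ρ : Perm X} (h : IsConj π ρ) (hπ : ∀ x, π x ≠ x) (x : X) :
    ρ x ≠ x := by
  obtain ⟨c, rfl⟩ := isConj_iff.1 h
  intro hx
  exact hπ (c⁻¹ x) (by rwa [eq_inv_iff_eq])

theorem actsFreely_dihedralGroup_iff {φ : DihedralGroup m →* Perm X} :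
    ActsFreely φ ↔ (∀ x, minimalPeriod (φ (sr 0)) x = 2) ∧ (∀ x, minimalPeriod (φ (sr 1)) x = 2) ∧
      ∀ x, minimalPeriod (φ (sr 0) * φ (sr 1)) x = m := by
  have hr_one : φ (sr 0) * φ (sr 1) = φ (r 1) := by rw [← map_mul, sr_mul_sr, sub_zero]
  rw [hr_one]
  constructor
  · intro hφ
    simp only [hφ.minimalPeriod_eq_orderOf, orderOf_sr, orderOf_r_one, implies_true, and_self]
  · rintro ⟨h₀, h₁, hr⟩ (i | i) x hx
    · obtain ⟨k, rfl⟩ := ZMod.intCast_surjective i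
      rw [← r_one_zpow, map_zpow, zpow_apply_eq_self_iff_minimalPeriod_dvd, hr] at hx
      rw [(ZMod.intCast_zmod_eq_zero_iff_dvd k m).2 hx, r_zero]
    · have moves {j : ZMod m} (hj : ∀ y, minimalPeriod (φ (sr j)) y = 2) (y : X) :
          φ (sr j) y ≠ y :=
        apply_ne_self_of_minimalPeriod_ne_one (by rw [hj]; exact OfNat.ofNat_ne_one 2)
      rcases isConj_sr_zero_or_isConj_sr_one i with hconj | hconj
      · exact absurd hx (apply_ne_self_of_isConj (φ.map_isConj hconj) (moves h₀) x)
      · exact absurd hx (apply_ne_self_of_isConj (φ.map_isConj hconj) (moves h₁) x)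

/-- A free action of the dihedral group of order `2m` in which `sr 0` acts as the involution `α`
amounts to the permutation `τ` by which `sr 1` acts. -/
def dihedralFreeActionEquiv {α : Perm X} (hα : ∀ x, minimalPeriod α x = 2) :
    {φ : DihedralGroup m →* Perm X // ActsFreely φ ∧ φ (sr 0) = α} ≃
      {τ : Perm X // (∀ x, minimalPeriod τ x = 2) ∧ ∀ x, minimalPeriod (α * τ) x = m} where
  toFun φ := ⟨φ.1 (sr 1), by
    obtain ⟨-, h⟩ := actsFreely_dihedralGroup_iff.1 φ.2.1
    rwa [φ.2.2] at h⟩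
  invFun τ := ⟨dihedralLift α τ.1 (pow_eq_one_of_minimalPeriod_eq hα)
      (pow_eq_one_of_minimalPeriod_eq τ.2.1) (pow_eq_one_of_minimalPeriod_eq τ.2.2),
    actsFreely_dihedralGroup_iff.2 (by
      simpa only [dihedralLift_sr_zero, dihedralLift_sr_one] using ⟨hα, τ.2⟩),
    dihedralLift_sr_zero ..⟩
  left_inv φ := Subtype.ext (dihedralGroup_hom_ext
    (by rw [dihedralLift_sr_zero, φ.2.2]) (by rw [dihedralLift_sr_one]))
  right_inv τ := Subtype.ext (by simp only [dihedralLift_sr_one])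

theorem nat_card_minimalPeriod_mul_eq [Finite X] (hm : m ≠ 0) (hX : Nat.card X = 2 * m)
    {α : Perm X} (hα : ∀ x, minimalPeriod α x = 2) :
    Nat.card {τ : Perm X // (∀ x, minimalPeriod τ x = 2) ∧ ∀ x, minimalPeriod (α * τ) x = m} =
      2 ^ (m - 1) * (m - 1).factorial := by
  classical
  have := Fintype.ofFinite X
  have : NeZero m := ⟨hm⟩
  have hX' : Fintype.card X = m * 2 := by rw [← Nat.card_eq_fintype_card, hX, mul_comm]
  have hcentralizer : Nat.card (Subgroup.centralizer {α}) = 2 ^ m * m.factorial :=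
    nat_card_centralizer_of_cycleType_eq_replicate hX'
      ((cycleType_eq_replicate_iff_minimalPeriod_eq le_rfl hX').2 hα)
  refine Nat.eq_of_mul_eq_mul_right (show 0 < 2 * m by omega) ?_
  calc
    _ = Nat.card {φ : DihedralGroup m →* Perm X // ActsFreely φ ∧ φ (sr 0) = α} * Nat.card X := by
      rw [Nat.card_congr (dihedralFreeActionEquiv hα), hX]
    _ = 2 ^ m * m.factorial := by
      rw [nat_card_actsFreely_mul (DihedralGroup.nat_card.trans hX.symm)
        (by simpa only [orderOf_sr]), hcentralizer]
    _ = 2 ^ (m - 1) * (m - 1).factorial * (2 * m) := by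
      rw [← Nat.mul_factorial_pred hm, ← pow_sub_one_mul hm]
      ring

end Dihedral

theorem card_Xprime_general {X : Type*} [Fintype X] [DecidableEq X] {m : ℕ} (hm : 2 ≤ m)
    (hX : Fintype.card X = 2 * m) {α : Perm X} (hα : α.cycleType = Multiset.replicate m 2) :
    Nat.card {τ : Perm X |
        τ.cycleType = Multiset.replicate m 2 ∧ (α * τ).cycleType = {m, m}} =
      2 ^ (m - 1) * (m - 1).factorial := by
  have involution_iff {τ : Perm X} :
      τ.cycleType = Multiset.replicate m 2 ↔ ∀ x, minimalPeriod τ x = 2 :=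
    cycleType_eq_replicate_iff_minimalPeriod_eq le_rfl (hX.trans (mul_comm 2 m))
  have product_iff {ρ : Perm X} : ρ.cycleType = {m, m} ↔ ∀ x, minimalPeriod ρ x = m :=
    cycleType_eq_replicate_iff_minimalPeriod_eq hm hX
  simp only [involution_iff, product_iff] at hα ⊢
  exact nat_card_minimalPeriod_mul_eq (by omega) (by rwa [Nat.card_eq_fintype_card]) hα

/-- For σ a product of n disjoint 4-cycles in the symmetric group on `Fin (4n)`, the
number of products τ of 2n disjoint transpositions such that σ²·τ is a product of two
disjoint 2n-cycles equals `(4n-2)!! = 2^(2n-1)·(2n-1)!`. -/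
theorem card_Xprime (n : ℕ) (hn : 1 ≤ n) (σ : Equiv.Perm (Fin (4 * n)))
    (hσ : σ.cycleType = Multiset.replicate n 4) :
    Nat.card {τ : Equiv.Perm (Fin (4 * n)) |
        τ.cycleType = Multiset.replicate (2 * n) 2 ∧
        (σ ^ 2 * τ).cycleType = {2 * n, 2 * n}}
      = 2 ^ (2 * n - 1) * (2 * n - 1).factorial := by
  have hsq := cycleType_pow_eq_replicate two_ne_zero le_rfl (by rw [Fintype.card_fin, mul_comm]) hσ
  exact card_Xprime_general (by omega) (by rw [Fintype.card_fin]; ring) (mul_comm n 2 ▸ hsq)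
end

section
/- Let n be even, n ≥ 2, and in S_{2n} let ρ be the involution pairing 2k with 2k+1, C_ρ its centralizer, β the 2n-cycle x ↦ x+1 (mod 2n), and r the order-reversing involution x ↦ 2n−1−x. Then for every σ ∈ β·C_ρ and every integer p, one has β^{2p}·σ·β^{−2p} ≠ r·σ·r and β^{2p}·σ·β^{−2p} ≠ β⁻¹·σ⁻¹·β; in other words, no element of U = β·C_ρ is conjugate by a power of β² to its reversal image σ_r = r·σ·r, nor to its swap-mirror image σ_{sm} = β⁻¹·σ⁻¹·β. -/
/-- The fixed-point-free involution of `Fin (2n)` pairing `2k` with `2k+1`. -/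
def rho (n : ℕ) : Equiv.Perm (Fin (2 * n)) :=
  Function.Involutive.toPerm
    (fun x => ⟨if x.val % 2 = 0 then x.val + 1 else x.val - 1, by
      have := x.isLt; split_ifs with h <;> omega⟩)
    (by
      intro x
      have hx := x.isLt
      apply Fin.ext
      dsimp only
      split_ifs <;> omega)

/-- The order-reversing involution `x ↦ 2n - 1 - x` of `Fin (2n)`. -/
def rev (n : ℕ) : Equiv.Perm (Fin (2 * n)) :=
  Function.Involutive.toPerm
    (fun x => ⟨2 * n - 1 - x.val, by have := x.isLt; omega⟩)
    (by
      intro x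
      have hx := x.isLt
      apply Fin.ext
      dsimp only
      omega)

/-!
An element `ξ` of the centralizer of `ρ` permutes the `n` pairs `{2k, 2k+1}`; let `χ ξ` be the
sign of that permutation. As `β²` induces an `n`-cycle on the pairs, `χ (β²) = -1` for even `n`.

Let `σ = β ξ` and let `c` be a power of `β²`. Since `r β r = β⁻¹`, the equation `c σ c⁻¹ = r σ r`
says `β² (c ξ c⁻¹) = r⁻¹ ξ r`, while `c σ c⁻¹ = β⁻¹ σ⁻¹ β` says `β² (c ξ c⁻¹) = ξ⁻¹`. All factors
lie in the centralizer, and applying `χ` to either equation gives `χ (β²) = 1`.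
-/

section CharacterObstruction

variable {G : Type*} [Group G] {β : G}

theorem sq_mul_conj_eq_mul_conj_mul {c : G} (hc : Commute c β) (ξ : G) :
    β ^ 2 * (c * ξ * c⁻¹) = β * (c * (β * ξ) * c⁻¹) := by
  rw [sq, ← mul_assoc c β ξ, hc.eq]
  simp only [mul_assoc]

variable {A : Type*} [CommGroup A] {C : Subgroup G} {c r ξ : C}

theorem map_sq_eq_one_of_conj_eq_reversal (χ : C →* A) (hβ : β ^ 2 ∈ C)
    (hc : Commute (c : G) β) (hr : (r : G) * β * r = β⁻¹)
    (h : (c : G) * (β * ξ) * (c : G)⁻¹ = r * (β * ξ) * r) :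
    χ ⟨β ^ 2, hβ⟩ = 1 := by
  have key : (⟨β ^ 2, hβ⟩ : C) * (c * ξ * c⁻¹) = r⁻¹ * ξ * r := by
    apply Subtype.ext
    push_cast
    calc β ^ 2 * ((c : G) * ξ * (c : G)⁻¹)
        = β * (c * (β * ξ) * (c : G)⁻¹) := sq_mul_conj_eq_mul_conj_mul hc ξ
      _ = β * (r * β * r) * (r : G)⁻¹ * ξ * r := by rw [h]; group
      _ = (r : G)⁻¹ * ξ * r := by rw [hr]; group
  simpa [mul_right_comm] using congrArg χ key

theorem map_sq_eq_inv_sq_of_conj_eq_swapMirror (χ : C →* A) (hβ : β ^ 2 ∈ C)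
    (hc : Commute (c : G) β)
    (h : (c : G) * (β * ξ) * (c : G)⁻¹ = β⁻¹ * (β * (ξ : G))⁻¹ * β) :
    χ ⟨β ^ 2, hβ⟩ = (χ ξ ^ 2)⁻¹ := by
  have key : (⟨β ^ 2, hβ⟩ : C) * (c * ξ * c⁻¹) = ξ⁻¹ := by
    apply Subtype.ext
    push_cast
    calc β ^ 2 * ((c : G) * ξ * (c : G)⁻¹)
        = β * (c * (β * ξ) * (c : G)⁻¹) := sq_mul_conj_eq_mul_conj_mul hc ξ
      _ = (ξ : G)⁻¹ := by rw [h]; group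
  have hχ : χ ⟨β ^ 2, hβ⟩ * χ ξ = (χ ξ)⁻¹ := by simpa using congrArg χ key
  rw [eq_mul_inv_of_mul_eq hχ, sq, mul_inv]

end CharacterObstruction

theorem val_finRotate {m : ℕ} (x : Fin m) :
    (finRotate m x : ℕ) = if (x : ℕ) + 1 = m then 0 else (x : ℕ) + 1 := by
  cases m with
  | zero => exact x.elim0
  | succ k => simp only [coe_finRotate, Fin.ext_iff, Fin.val_last, Nat.add_right_cancel_iff]

section PairAction

open Equiv

variable {n : ℕ}

theorem val_rho (x : Fin (2 * n)) :
    (rho n x : ℕ) = if (x : ℕ) % 2 = 0 then (x : ℕ) + 1 else (x : ℕ) - 1 := rfl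

theorem val_rev (x : Fin (2 * n)) : (rev n x : ℕ) = 2 * n - 1 - x := rfl

theorem finRotate_sq_mem_centralizer_rho :
    finRotate (2 * n) ^ 2 ∈ Subgroup.centralizer {rho n} := by
  rw [Subgroup.mem_centralizer_singleton_iff]
  ext x
  simp only [sq, Perm.mul_apply, val_rho, val_finRotate]
  split_ifs <;> omega

theorem rev_mem_centralizer_rho : rev n ∈ Subgroup.centralizer {rho n} := by
  rw [Subgroup.mem_centralizer_singleton_iff]
  ext x
  simp only [Perm.mul_apply, val_rho, val_rev]
  grind

theorem rev_mul_finRotate_mul_rev :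
    rev n * finRotate (2 * n) * rev n = (finRotate (2 * n))⁻¹ := by
  rw [eq_inv_iff_mul_eq_one]
  ext x
  simp only [Perm.mul_apply, Perm.one_apply, val_rev, val_finRotate]
  split_ifs <;> omega

/-- The index `k` of the `ρ`-orbit `{2k, 2k+1}` containing a point. -/
def pairIndex (x : Fin (2 * n)) : Fin n := ⟨x / 2, by omega⟩

/-- The representative `2k` of the `ρ`-orbit `{2k, 2k+1}`; a section of `pairIndex`. -/
def pairBase (k : Fin n) : Fin (2 * n) := ⟨2 * k, by omega⟩

theorem pairIndex_pairBase (k : Fin n) : pairIndex (pairBase k) = k := by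
  ext
  simp only [pairIndex, pairBase]
  omega

theorem pairIndex_eq_iff {x y : Fin (2 * n)} :
    pairIndex x = pairIndex y ↔ x = y ∨ x = rho n y := by
  simp only [pairIndex, Fin.ext_iff, val_rho]
  split_ifs <;> omega

theorem pairIndex_apply_congr {ξ : Perm (Fin (2 * n))} (hξ : ξ ∈ Subgroup.centralizer {rho n})
    {x y : Fin (2 * n)} (hxy : pairIndex x = pairIndex y) :
    pairIndex (ξ x) = pairIndex (ξ y) := by
  rw [Subgroup.mem_centralizer_singleton_iff] at hξ
  rw [pairIndex_eq_iff] at hxy ⊢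
  exact hxy.imp (congrArg ξ) fun h ↦ (congrArg ξ h).trans (DFunLike.congr_fun hξ y)

/-- The action of the centralizer of `ρ` on the `ρ`-orbits `{2k, 2k+1}`, these being indexed by
`k : Fin n`. -/
def pairPerm (n : ℕ) : Subgroup.centralizer {rho n} →* Perm (Fin n) :=
  MonoidHom.toHomPerm
    { toFun := fun ξ k ↦ pairIndex (ξ.1 (pairBase k))
      map_one' := funext pairIndex_pairBase
      map_mul' := fun ξ η ↦ funext fun _ ↦
        pairIndex_apply_congr ξ.2 (pairIndex_pairBase (pairIndex (η.1 _))).symm }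

theorem pairPerm_apply (ξ : Subgroup.centralizer {rho n}) (k : Fin n) :
    pairPerm n ξ k = pairIndex (ξ.1 (pairBase k)) := rfl

theorem pairPerm_finRotate_sq :
    pairPerm n ⟨finRotate (2 * n) ^ 2, finRotate_sq_mem_centralizer_rho⟩ = finRotate n := by
  ext k
  simp only [pairPerm_apply, pairIndex, pairBase, sq, Perm.mul_apply, val_finRotate]
  split_ifs <;> omega

/-- The character `χ` of the centralizer of `ρ`: the sign of the induced permutation of the
`ρ`-orbits. -/
def pairSign (n : ℕ) : Subgroup.centralizer {rho n} →* ℤˣ :=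
  Perm.sign.comp (pairPerm n)

theorem pairSign_finRotate_sq (hn : n ≠ 0) (heven : Even n) :
    pairSign n ⟨finRotate (2 * n) ^ 2, finRotate_sq_mem_centralizer_rho⟩ = -1 := by
  have hodd : Odd (n - 1) := Nat.Even.sub_odd (Nat.one_le_iff_ne_zero.2 hn) heven odd_one
  rw [pairSign, MonoidHom.comp_apply, pairPerm_finRotate_sq, sign_finRotate, hodd.neg_one_pow]

end PairAction

/-- For n even, no element σ of the coset U = β·C_ρ is conjugate by a power of β² to
its reversal image σ_r = r·σ·r, nor to its swap-mirror image σ_{sm} = β⁻¹·σ⁻¹·β. -/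
theorem reversal_swapMirror_never_symmetry_even (n : ℕ) (hn : 2 ≤ n) (heven : Even n)
    (σ : Equiv.Perm (Fin (2 * n)))
    (hσ : ∃ ξ ∈ Subgroup.centralizer {rho n}, σ = finRotate (2 * n) * ξ) (p : ℤ) :
    finRotate (2 * n) ^ (2 * p) * σ * (finRotate (2 * n) ^ (2 * p))⁻¹
        ≠ rev n * σ * rev n ∧
    finRotate (2 * n) ^ (2 * p) * σ * (finRotate (2 * n) ^ (2 * p))⁻¹
        ≠ (finRotate (2 * n))⁻¹ * σ⁻¹ * finRotate (2 * n) := by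
  obtain ⟨ξ, hξ, rfl⟩ := hσ
  have hβ : finRotate (2 * n) ^ 2 ∈ Subgroup.centralizer {rho n} :=
    finRotate_sq_mem_centralizer_rho
  have hχ : pairSign n ⟨finRotate (2 * n) ^ 2, hβ⟩ ≠ 1 := by
    rw [pairSign_finRotate_sq (by omega) heven]
    decide
  have hc : finRotate (2 * n) ^ (2 * p) ∈ Subgroup.centralizer {rho n} := by
    rw [zpow_mul]
    exact zpow_mem hβ p
  have hcomm : Commute (finRotate (2 * n) ^ (2 * p)) (finRotate (2 * n)) :=
    Commute.zpow_self _ _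
  constructor
  · intro h
    exact hχ <| map_sq_eq_one_of_conj_eq_reversal (c := ⟨_, hc⟩) (ξ := ⟨ξ, hξ⟩)
      (r := ⟨_, rev_mem_centralizer_rho⟩) _ hβ hcomm rev_mul_finRotate_mul_rev h
  · intro h
    have hsq := map_sq_eq_inv_sq_of_conj_eq_swapMirror (c := ⟨_, hc⟩) (ξ := ⟨ξ, hξ⟩)
      (pairSign n) hβ hcomm h
    exact hχ <| by rw [hsq, Int.units_sq, inv_one]
end
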